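/- The pair (O₁₂, O₃₄) solves the unweighted two-node Steiner problem for the trapezium: for all points P and Q in the plane, dist(A₁',O₁₂) + dist(A₂',O₁₂) + dist(A₃,O₃₄) + dist(A₄,O₃₄) + dist(O₁₂,O₃₄) ≤ dist(A₁',P) + dist(A₂',P) + dist(A₃,Q) + dist(A₄,Q) + dist(P,Q). -/

import Mathlib

open Real EuclideanGeometry

noncomputable def pt (x y : ℝ) : EuclideanSpace ℝ (Fin 2) :=
  (WithLp.equiv 2 (Fin 2 → ℝ)).symm ![x, y]

/-!
The proof is by calibration. A functional `f` with `‖f‖ ≤ 1` and `f x = ‖x‖` is a subgradient of the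
norm at `x`, so moving an endpoint of an edge changes the length of the edge by at least a linear
term. If at each Steiner point the functionals attached to the edges sum to zero, these linear terms
cancel, and no displacement of the Steiner points can shorten the network. For the trapezium the
functionals are the inner products with the unit vectors along the edges, which meet at angles of
`2π / 3`.
-/

section Calibration

variable {V X ι κ : Type*} [SeminormedAddCommGroup V] [NormedSpace ℝ V] [PseudoMetricSpace X]
  [NormedAddTorsor V X] [Fintype ι] [Fintype κ]

/-- `f` is a norming functional of `x`, equivalently a subgradient of the norm at `x`. Only
`‖f‖ ≤ 1` is required, so that at `x = 0` every functional in the dual unit ball qualifies. -/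
structure IsNorming (f : StrongDual ℝ V) (x : V) : Prop where
  norm_le_one : ‖f‖ ≤ 1
  apply_eq_norm : f x = ‖x‖

/-- The length of the network in which the terminals `A i` are joined to the Steiner point `P`, the
terminals `B j` to the Steiner point `Q`, and `P` to `Q`. -/
noncomputable def twoNodeLength (A : ι → X) (B : κ → X) (P Q : X) : ℝ :=
  ∑ i, dist (A i) P + ∑ j, dist (B j) Q + dist P Q

theorem IsNorming.norm_le_norm_add {f : StrongDual ℝ V} {x : V} (hf : IsNorming f x) (y : V) :
    ‖x‖ ≤ ‖y‖ + f (x - y) := by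
  have hy : f y ≤ ‖y‖ := by
    simpa only [one_mul] using (le_abs_self _).trans (f.le_of_opNorm_le hf.norm_le_one y)
  rw [map_sub, hf.apply_eq_norm]
  linarith

theorem sum_dist_le_sum_dist_add {A : ι → X} {O : X} {f : ι → StrongDual ℝ V}
    (hf : ∀ i, IsNorming (f i) (A i -ᵥ O)) (P : X) :
    ∑ i, dist (A i) O ≤ ∑ i, dist (A i) P + (∑ i, f i) (P -ᵥ O) := by
  rw [sum_apply, ← Finset.sum_add_distrib]
  gcongr with i
  simpa only [← dist_eq_norm_vsub, vsub_sub_vsub_cancel_left]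
    using (hf i).norm_le_norm_add (A i -ᵥ P)

theorem twoNodeLength_le_of_balanced {A : ι → X} {B : κ → X} {O O' : X}
    {f : ι → StrongDual ℝ V} {g : κ → StrongDual ℝ V} {h : StrongDual ℝ V}
    (hf : ∀ i, IsNorming (f i) (A i -ᵥ O)) (hg : ∀ j, IsNorming (g j) (B j -ᵥ O'))
    (hh : IsNorming h (O -ᵥ O')) (hfh : ∑ i, f i = h) (hgh : ∑ j, g j = -h) (P Q : X) :
    twoNodeLength A B O O' ≤ twoNodeLength A B P Q := by
  have node_O := sum_dist_le_sum_dist_add hf P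
  have node_O' := sum_dist_le_sum_dist_add hg Q
  have edge : dist O O' ≤ dist P Q + h ((O -ᵥ O') - (P -ᵥ Q)) := by
    simpa only [← dist_eq_norm_vsub] using hh.norm_le_norm_add (P -ᵥ Q)
  have cancel : h (P -ᵥ O) + (-h) (Q -ᵥ O') + h ((O -ᵥ O') - (P -ᵥ Q)) = 0 := by
    rw [vsub_sub_vsub_comm, ← neg_vsub_eq_vsub_rev P O, ← neg_vsub_eq_vsub_rev Q O', map_sub,
      map_neg, map_neg, neg_apply]
    ring
  rw [hfh] at node_O
  rw [hgh] at node_O'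
  unfold twoNodeLength
  linarith

theorem twoNodeLength_pair (A₁ A₂ B₁ B₂ P Q : X) :
    twoNodeLength ![A₁, A₂] ![B₁, B₂] P Q =
      dist A₁ P + dist A₂ P + dist B₁ Q + dist B₂ Q + dist P Q := by
  simp [twoNodeLength, add_assoc]

end Calibration

theorem isNorming_innerSL_smul {V : Type*} [SeminormedAddCommGroup V] [InnerProductSpace ℝ V]
    {u : V} (hu : ‖u‖ = 1) {r : ℝ} (hr : 0 ≤ r) : IsNorming (innerSL ℝ u) (r • u) where
  norm_le_one := by rw [innerSL_apply_norm, hu]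
  apply_eq_norm := by simp [norm_smul, hu, abs_of_nonneg hr]

theorem pt_add_pt (x y z w : ℝ) : pt x y + pt z w = pt (x + z) (y + w) := by
  ext i; fin_cases i <;> simp [pt]

theorem neg_pt (x y : ℝ) : -pt x y = pt (-x) (-y) := by
  ext i; fin_cases i <;> simp [pt]

theorem pt_sub_pt (x y z w : ℝ) : pt x y - pt z w = pt (x - z) (y - w) := by
  ext i; fin_cases i <;> simp [pt]

theorem smul_pt (r x y : ℝ) : r • pt x y = pt (r * x) (r * y) := by
  ext i; fin_cases i <;> simp [pt]

theorem norm_pt (x y : ℝ) : ‖pt x y‖ = √(x ^ 2 + y ^ 2) := by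
  simp [pt, EuclideanSpace.norm_eq]

theorem isNorming_innerSL_pt {x y z w u v r : ℝ} (huv : u ^ 2 + v ^ 2 = 1) (hr : 0 ≤ r)
    (hx : x - z = r * u) (hy : y - w = r * v) :
    IsNorming (innerSL ℝ (pt u v)) (pt x y -ᵥ pt z w) := by
  rw [vsub_eq_sub, pt_sub_pt, hx, hy, ← smul_pt]
  exact isNorming_innerSL_smul (by rw [norm_pt, huv, sqrt_one]) hr

/-- The unit vector `(σ * √3 / 2, τ / 2)`, for signs `σ` and `τ`: the direction from a Steiner
point to one of its terminals, at an angle of `π / 3` with the axis of the trapezium. -/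
noncomputable def spokeDirection (σ τ : ℝ) : EuclideanSpace ℝ (Fin 2) :=
  pt (σ * (√3 / 2)) (τ * (1 / 2))

theorem spokeDirection_neg_one_add_one (τ : ℝ) :
    spokeDirection (-1) τ + spokeDirection 1 τ = pt 0 τ := by
  rw [spokeDirection, spokeDirection, pt_add_pt]
  congr 1 <;> ring

theorem isNorming_innerSL_spokeDirection {σ τ a x y w : ℝ} (hσ : σ ^ 2 = 1) (hτ : τ ^ 2 = 1)
    (ha : 0 ≤ a) (hx : x = σ * (a / 2)) (hy : y - w = τ * (a / (2 * √3))) :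
    IsNorming (innerSL ℝ (spokeDirection σ τ)) (pt x y -ᵥ pt 0 w) := by
  have unit : (σ * (√3 / 2)) ^ 2 + (τ * (1 / 2)) ^ 2 = 1 := by
    rw [mul_pow, mul_pow, hσ, hτ, div_pow, sq_sqrt zero_le_three]
    norm_num
  refine isNorming_innerSL_pt (r := a / √3) unit (by positivity) ?_ ?_
  · rw [hx]; field_simp; ring
  · rw [hy]; ring

theorem add_div_two_mul_sqrt_three_le_max {a b : ℝ} (ha : 0 ≤ a) (hb : 0 ≤ b) :
    (a + b) / (2 * √3) ≤ max a b := by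
  have one_le : 1 ≤ √3 := one_le_sqrt.2 (by norm_num)
  calc
    (a + b) / (2 * √3) ≤ (a + b) / 2 := by gcongr; linarith
    _ ≤ max a b := by linarith [le_max_left a b, le_max_right a b]

/-- The assumption `(a12 + a34) / (2 * √3) ≤ d` says that `O₁₂` does not lie below `O₃₄`. -/
theorem stmt_10_general (a12 a34 d : ℝ) (ha12 : 0 ≤ a12) (ha34 : 0 ≤ a34)
    (hd : (a12 + a34) / (2 * √3) ≤ d)
    (A₁' A₂' A₃ A₄ O₁₂ O₃₄ : EuclideanSpace ℝ (Fin 2))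
    (hA₁ : A₁' = pt (-(a12 / 2)) d) (hA₂ : A₂' = pt (a12 / 2) d)
    (hA₃ : A₃ = pt (a34 / 2) 0) (hA₄ : A₄ = pt (-(a34 / 2)) 0)
    (hO₁₂ : O₁₂ = pt 0 (d - a12 / (2 * √3)))
    (hO₃₄ : O₃₄ = pt 0 (a34 / (2 * √3))) (P Q : EuclideanSpace ℝ (Fin 2)) :
    dist A₁' O₁₂ + dist A₂' O₁₂ + dist A₃ O₃₄ + dist A₄ O₃₄ + dist O₁₂ O₃₄ ≤
      dist A₁' P + dist A₂' P + dist A₃ Q + dist A₄ Q + dist P Q := by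
  subst hA₁ hA₂ hA₃ hA₄ hO₁₂ hO₃₄
  have axis_nonneg : 0 ≤ d - a12 / (2 * √3) - a34 / (2 * √3) := by
    rw [add_div] at hd
    linarith
  have axis : IsNorming (innerSL ℝ (pt 0 1))
      (pt 0 (d - a12 / (2 * √3)) -ᵥ pt 0 (a34 / (2 * √3))) :=
    isNorming_innerSL_pt (by norm_num) axis_nonneg (by ring) (by ring)
  simp only [← twoNodeLength_pair]
  refine twoNodeLength_le_of_balanced
    (f := ![innerSL ℝ (spokeDirection (-1) 1), innerSL ℝ (spokeDirection 1 1)])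
    (g := ![innerSL ℝ (spokeDirection 1 (-1)), innerSL ℝ (spokeDirection (-1) (-1))])
    ?spokes₁₂ ?spokes₃₄ axis ?balance₁₂ ?balance₃₄ P Q
  case spokes₁₂ =>
    refine Fin.forall_fin_two.2 ⟨?_, ?_⟩ <;>
      exact isNorming_innerSL_spokeDirection (by norm_num) (by norm_num) ha12 (by ring) (by ring)
  case spokes₃₄ =>
    refine Fin.forall_fin_two.2 ⟨?_, ?_⟩ <;>
      exact isNorming_innerSL_spokeDirection (by norm_num) (by norm_num) ha34 (by ring) (by ring)
  case balance₁₂ =>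
    simp [Fin.sum_univ_two, ← map_add, spokeDirection_neg_one_add_one]
  case balance₃₄ =>
    simp [Fin.sum_univ_two, ← map_add, ← map_neg, add_comm (spokeDirection 1 _),
      spokeDirection_neg_one_add_one, neg_pt]

theorem stmt_10 (a12 a34 d : ℝ) (ha12 : 0 < a12) (ha34 : 0 < a34)
    (hd : max a12 a34 < d)
    (A₁' A₂' A₃ A₄ O₁₂ O₃₄ : EuclideanSpace ℝ (Fin 2))
    (hA₁ : A₁' = pt (-(a12 / 2)) d) (hA₂ : A₂' = pt (a12 / 2) d)
    (hA₃ : A₃ = pt (a34 / 2) 0) (hA₄ : A₄ = pt (-(a34 / 2)) 0)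
    (hO₁₂ : O₁₂ = pt 0 (d - a12 / (2 * Real.sqrt 3)))
    (hO₃₄ : O₃₄ = pt 0 (a34 / (2 * Real.sqrt 3))) :
    ∀ P Q : EuclideanSpace ℝ (Fin 2),
      dist A₁' O₁₂ + dist A₂' O₁₂ + dist A₃ O₃₄ + dist A₄ O₃₄ + dist O₁₂ O₃₄ ≤
      dist A₁' P + dist A₂' P + dist A₃ Q + dist A₄ Q + dist P Q := by
  exact stmt_10_general a12 a34 d ha12.le ha34.le
    ((add_div_two_mul_sqrt_three_le_max ha12.le ha34.le).trans hd.le)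
    A₁' A₂' A₃ A₄ O₁₂ O₃₄ hA₁ hA₂ hA₃ hA₄ hO₁₂ hO₃₄
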